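/- Let q = p^m ≡ 5 (mod 8) be a prime power with primitive element α of F_q, and let q = s² + t² be the Katre–Rajwade-normalized representation. For i ∈ F_q^* set D_i = {i, 2i} and let D = {D_i : i ∈ C_0^4}. Then: (i) if 2 ∈ C_1^4, D is a (q,(q−1)/4,2,(q−5)/4)-EDF when t = −2, and a (q,(q−1)/4,2;(q−9)/4,(q−1)/4)-EPDF relative to C_0^2 when t = 2; (ii) if 2 ∈ C_3^4, D is a (q,(q−1)/4,2,(q−5)/4)-EDF when t = 2, and a (q,(q−1)/4,2;(q−9)/4,(q−1)/4)-EPDF relative to C_0^2 when t = −2. In all cases D is a (q,(q−1)/4,2;1,0)-DPDF relative to C_0^2 (that is, Σ_{i∈C_0^4} Δ(D_i) = C_0^2 as multisets). -/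

import Mathlib

open Finset

section Defs

variable {G : Type*} [AddCommGroup G] [Fintype G] [DecidableEq G]

/-- The multiset `Δ(D)` of internal differences `x - y` (for `x ≠ y` in `D`). -/
def intDiff (D : Finset G) : Multiset G :=
  ((D ×ˢ D).filter (fun p => p.1 ≠ p.2)).val.map (fun p => p.1 - p.2)

/-- The multiset `Δ(D, E)` of external differences `x - y` for `x ∈ D`, `y ∈ E`. -/
def extDiff (D E : Finset G) : Multiset G :=
  (D ×ˢ E).val.map (fun p => p.1 - p.2)

/-- The finset `G^*` of nonzero elements of `G`. -/
def Gstar (G : Type*) [AddCommGroup G] [Fintype G] [DecidableEq G] : Finset G :=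
  Finset.univ.erase 0

/-- `A` is a `(v, k, lam, mu)` partial difference set in `G`:
`Δ(A) = lam • A^* + mu • (G^* \ A)`. -/
def IsPDS (A : Finset G) (v k lam mu : ℕ) : Prop :=
  Fintype.card G = v ∧ A.card = k ∧
    intDiff A = lam • (A.erase 0).val + mu • (Gstar G \ A).val

/-- `D` is a `(v, k, lam, mu)` skew partial difference set corresponding to the
`(v, k, lam, mu)`-PDS `A`: `Δ(D) = lam • A^* + mu • (G^* \ A)`. -/
def IsSkewPDS (D A : Finset G) (v k lam mu : ℕ) : Prop :=
  IsPDS A v k lam mu ∧ D.card = k ∧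
    intDiff D = lam • (A.erase 0).val + mu • (Gstar G \ A).val

/-- `D` is an `(n, m, k₁, …, k_m; lam, mu)` disjoint partial difference family relative
to `T`: the `D i` are pairwise disjoint subsets of `G^*` of sizes `k i`, and
`∑ i, Δ(D i) = lam • T + mu • (G^* \ T)`. -/
def IsDPDF {ι : Type*} [Fintype ι] (D : ι → Finset G) (n m : ℕ) (k : ι → ℕ)
    (T : Finset G) (lam mu : ℕ) : Prop :=
  Fintype.card G = n ∧ Fintype.card ι = m ∧
    (∀ i, (0 : G) ∉ D i) ∧ (∀ i, (D i).card = k i) ∧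
    (Pairwise (fun i j => Disjoint (D i) (D j))) ∧
    ∑ i, intDiff (D i) = lam • T.val + mu • (Gstar G \ T).val

/-- `D` is an `(n, m, k₁, …, k_m; lam, mu)` external partial difference family relative
to `T`: the `D i` are pairwise disjoint subsets of `G^*` of sizes `k i`, and
`∑_{i ≠ j}, Δ(D i, D j) = lam • T + mu • (G^* \ T)`. -/
def IsEPDF {ι : Type*} [Fintype ι] [DecidableEq ι] (D : ι → Finset G) (n m : ℕ)
    (k : ι → ℕ) (T : Finset G) (lam mu : ℕ) : Prop :=
  Fintype.card G = n ∧ Fintype.card ι = m ∧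
    (∀ i, (0 : G) ∉ D i) ∧ (∀ i, (D i).card = k i) ∧
    (Pairwise (fun i j => Disjoint (D i) (D j))) ∧
    ∑ i, ∑ j ∈ Finset.univ.erase i, extDiff (D i) (D j)
      = lam • T.val + mu • (Gstar G \ T).val

/-- `D` is an `(n, m, k₁, …, k_m, lam)` disjoint difference family:
`∑ i, Δ(D i) = lam • G^*`. -/
def IsDDF {ι : Type*} [Fintype ι] (D : ι → Finset G) (n m : ℕ) (k : ι → ℕ)
    (lam : ℕ) : Prop :=
  Fintype.card G = n ∧ Fintype.card ι = m ∧
    (∀ i, (0 : G) ∉ D i) ∧ (∀ i, (D i).card = k i) ∧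
    (Pairwise (fun i j => Disjoint (D i) (D j))) ∧
    ∑ i, intDiff (D i) = lam • (Gstar G).val

/-- `D` is an `(n, m, k₁, …, k_m, lam)` external difference family:
`∑_{i ≠ j}, Δ(D i, D j) = lam • G^*`. -/
def IsEDF {ι : Type*} [Fintype ι] [DecidableEq ι] (D : ι → Finset G) (n m : ℕ)
    (k : ι → ℕ) (lam : ℕ) : Prop :=
  Fintype.card G = n ∧ Fintype.card ι = m ∧
    (∀ i, (0 : G) ∉ D i) ∧ (∀ i, (D i).card = k i) ∧
    (Pairwise (fun i j => Disjoint (D i) (D j))) ∧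
    ∑ i, ∑ j ∈ Finset.univ.erase i, extDiff (D i) (D j) = lam • (Gstar G).val

end Defs

section Cyclotomy

variable {F : Type*} [Field F] [Fintype F] [DecidableEq F]

/-- The cyclotomic class `C_i^e = α^i ⟨α^e⟩` of order `e` in the finite field `F`,
with respect to the primitive element `α`.  (Since `α` has multiplicative order at most
`|F| - 1`, letting `j` range over `0, …, |F| - 1` captures the whole class.) -/
def cycClass (α : F) (e i : ℕ) : Finset F :=
  (Finset.range (Fintype.card F)).image (fun j => α ^ (e * j + i))

/-- `α` is a primitive element of the finite field `F`: every nonzero element of `F`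
is a power of `α`. -/
def IsPrimitiveElt (α : F) : Prop :=
  ∀ x : F, x ≠ 0 → ∃ n : ℕ, α ^ n = x

end Cyclotomy

/-- The family `{D_i : i ∈ C_0^4}` where `D_i = {i, 2i}`, indexed by the elements of
`C_0^4`. -/
def pairFam {F : Type*} [Field F] [Fintype F] [DecidableEq F] (α : F) :
    {x : F // x ∈ cycClass α 4 0} → Finset F :=
  fun i => {(i : F), 2 * (i : F)}


lemma choose_not_dvd (p r : ℕ) (hp : p.Prime) (hr : p = 4 * r + 1) (m : ℕ) :
    ∀ f : ℕ, 4 * f + 1 = p ^ m → ¬ p ∣ Nat.choose (3 * f) f := by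
  have := Fact.mk hp
  induction m with
  | zero =>
    intro f hf
    have : f = 0 := by simpa using hf
    subst this
    simpa using hp.one_lt.ne'
  | succ m ih =>
    intro f hf
    have h1 : p ^ m % 4 = 1 := by
      rw [Nat.pow_mod, hr]; simp [Nat.add_mod]
    obtain ⟨g, hg⟩ : ∃ g, 4 * g + 1 = p ^ m := ⟨p ^ m / 4, by omega⟩
    have hfe : f = r + p * g := by
      have : 4 * f + 1 = (4 * g + 1) * p := by rw [hf, pow_succ, hg]
      have h2 : 4 * f + 1 = 4 * (p * g) + p := by rw [this]; ring
      omega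
    have h3 : 3 * f = 3 * r + p * (3 * g) := by rw [hfe]; ring
    have key := Choose.choose_modEq_choose_mod_mul_choose_div_nat (p := p) (n := 3 * f) (k := f)
    have hrp : r < p := by omega
    have h3rp : 3 * r < p := by have := hp.two_le; omega
    have e1 : 3 * f % p = 3 * r := by
      rw [h3, Nat.add_mul_mod_self_left, Nat.mod_eq_of_lt h3rp]
    have e2 : f % p = r := by
      rw [hfe, Nat.add_mul_mod_self_left, Nat.mod_eq_of_lt hrp]
    have e3 : 3 * f / p = 3 * g := by
      rw [h3, Nat.add_mul_div_left _ _ hp.pos, Nat.div_eq_of_lt h3rp, zero_add]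
    have e4 : f / p = g := by
      rw [hfe, Nat.add_mul_div_left _ _ hp.pos, Nat.div_eq_of_lt hrp, zero_add]
    rw [e1, e2, e3, e4] at key
    rw [key.dvd_iff dvd_rfl, hp.dvd_mul]
    rintro (h | h)
    · have h5 : Nat.choose (3 * r) r ∣ (3 * r).factorial := by
        rw [← Nat.choose_mul_factorial_mul_factorial (show r ≤ 3 * r by omega), mul_assoc]
        exact Dvd.intro _ rfl
      have := (hp.dvd_factorial).1 (h.trans h5)
      omega
    · exact ih g hg h

lemma nt_final (p m : ℕ) (hp : p.Prime) (hp2 : p ≠ 2) (q : ℤ) (hq : q = (p : ℤ) ^ m)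
    (a b s t : ℤ) (h1 : q = a ^ 2 + b ^ 2) (h2 : q = s ^ 2 + t ^ 2)
    (hd : (p : ℤ) ∣ a * t + b * s) (ha : ¬ (p : ℤ) ∣ a) (ht : ¬ (p : ℤ) ∣ t)
    (hb : b % 2 = 0) (hab : (a + b) % 4 = 1) (hs4 : s % 4 = 1) (ht4 : t % 4 = 2) : b = t := by
  have hpi : Prime (p : ℤ) := Nat.prime_iff_prime_int.1 hp
  have hq0 : 0 < q := by rw [hq]; have := hp.pos; positivity
  have hprod : q ∣ (a * t + b * s) * (b * s - a * t) := by
    refine ⟨s ^ 2 - a ^ 2, ?_⟩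
    have hb2 : b ^ 2 = q - a ^ 2 := by linarith
    have ht2 : t ^ 2 = q - s ^ 2 := by linarith
    linear_combination s ^ 2 * hb2 - a ^ 2 * ht2
  have hnd : ¬ (p : ℤ) ∣ (b * s - a * t) := by
    intro h
    have h3 : (p : ℤ) ∣ 2 * (a * t) := by
      have e : 2 * (a * t) = (a * t + b * s) - (b * s - a * t) := by ring
      rw [e]; exact dvd_sub hd h
    rcases hpi.dvd_or_dvd h3 with h4 | h4
    · have : p ∣ 2 := by exact_mod_cast h4
      exact hp2 ((Nat.prime_dvd_prime_iff_eq hp Nat.prime_two).1 this)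
    · rcases hpi.dvd_or_dvd h4 with h | h
      · exact ha h
      · exact ht h
  have hqd : q ∣ a * t + b * s := by
    have hc : IsCoprime q (b * s - a * t) := by
      rw [hq]
      exact IsCoprime.pow_left ((Prime.coprime_iff_not_dvd hpi).2 hnd)
    exact hc.dvd_of_dvd_mul_right hprod
  obtain ⟨w, hw⟩ := hqd
  have hN : (a * s - b * t) ^ 2 + (a * t + b * s) ^ 2 = q ^ 2 := by
    have : q ^ 2 = (a ^ 2 + b ^ 2) * (s ^ 2 + t ^ 2) := by rw [← h1, ← h2]; ring
    rw [this]; ring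
  have hw1 : w ^ 2 ≤ 1 := by
    rw [hw] at hN
    have h3 : q ^ 2 * w ^ 2 ≤ q ^ 2 * 1 := by nlinarith [sq_nonneg (a * s - b * t)]
    exact le_of_mul_le_mul_left h3 (by positivity)
  have hw2 : w ≤ 1 := by nlinarith
  have hw3 : -1 ≤ w := by nlinarith
  -- q * b = s * (at+bs) - t (as - bt)
  have hqb : q * b = s * (a * t + b * s) - t * (a * s - b * t) := by rw [h2]; ring
  have hqa : q * a = t * (a * t + b * s) + s * (a * s - b * t) := by rw [h2]; ring
  have hcase : w = 0 ∨ w ^ 2 = 1 := by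
    have : w = -1 ∨ w = 0 ∨ w = 1 := by omega
    rcases this with h | h | h <;> simp [h]
  rcases hcase with h | h
  · rw [hw, h] at hN hqb hqa
    have h5 : (a * s - b * t) = q ∨ (a * s - b * t) = -q := by
      apply sq_eq_sq_iff_eq_or_eq_neg.1; linarith
    rcases h5 with h5 | h5
    · rw [h5] at hqb hqa
      have hb' : b = -t := by
        apply mul_left_cancel₀ hq0.ne'; linarith
      have ha' : a = s := by
        apply mul_left_cancel₀ hq0.ne'; linarith
      omega
    · rw [h5] at hqb hqa
      apply mul_left_cancel₀ hq0.ne'; linarith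
  · exfalso
    have h6 : a * s - b * t = 0 := by
      rw [hw, mul_pow, h] at hN
      have : (a * s - b * t) ^ 2 = 0 := by linarith
      exact pow_eq_zero_iff (two_ne_zero) |>.1 this
    rw [hw, h6] at hqb
    have hb' : b = s * w := by
      apply mul_left_cancel₀ hq0.ne'; linarith
    have : b % 2 = 1 := by
      rcases (sq_eq_sq_iff_eq_or_eq_neg.1 (h.trans (one_pow 2).symm)) with h | h <;> subst h <;> omega
    omega

lemma p_mod_four (p m q : ℕ) (hq : q = p ^ m) (hq8 : q % 8 = 5) : p % 4 = 1 := by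
  have h : p ^ m % 8 = 5 := by rw [← hq]; exact hq8
  have hm : p % 8 = 0 ∨ p % 8 = 1 ∨ p % 8 = 2 ∨ p % 8 = 3 ∨ p % 8 = 4 ∨ p % 8 = 5 ∨ p % 8 = 6
    ∨ p % 8 = 7 := by omega
  rcases Nat.even_or_odd' m with ⟨k, rfl | rfl⟩
  · rw [pow_mul, Nat.pow_mod, Nat.pow_mod p 2] at h
    exfalso
    rcases Nat.eq_zero_or_pos k with rfl | hk
    · simp at h
    obtain ⟨j, rfl⟩ : ∃ j, k = j + 1 := ⟨k - 1, by omega⟩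
    rcases hm with e | e | e | e | e | e | e | e <;> rw [e] at h <;> norm_num at h
    all_goals
      rcases j with _ | j
      · norm_num at h
      · rw [show j + 1 + 1 = 2 + j by ring, pow_add, Nat.mul_mod] at h; norm_num at h
  · rw [pow_add, pow_mul, Nat.mul_mod, Nat.pow_mod, Nat.pow_mod p 2, pow_one] at h
    rcases hm with e | e | e | e | e | e | e | e <;> rw [e] at h <;> norm_num at h <;> omega


section Main
variable {F : Type*} [Field F] [Fintype F] [DecidableEq F]

lemma sum_pow_F (j : ℕ) (hj : 0 < j) :
    ∑ x : F, x ^ j = if Fintype.card F - 1 ∣ j then -1 else 0 := by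
  have hi : j ≠ 0 := hj.ne'
  let φ : Fˣ ↪ F := ⟨fun x ↦ x, Units.val_injective⟩
  have : univ.map φ = univ \ {0} := by
    ext x
    simpa only [mem_map, mem_univ, Function.Embedding.coeFn_mk, true_and, mem_sdiff,
      mem_singleton, φ] using! isUnit_iff_ne_zero
  calc
    ∑ x : F, x ^ j = ∑ x ∈ univ \ {(0 : F)}, x ^ j := by
      rw [← sum_sdiff ({0} : Finset F).subset_univ, sum_singleton, zero_pow hi, add_zero]
    _ = ∑ x : Fˣ, (x ^ j : F) := by simp [φ, ← this, univ.sum_map φ]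
    _ = _ := FiniteField.sum_pow_units F j

lemma sum_beta (n : ℕ) (hn : 0 < n) :
    ∑ x : F, x ^ n * (1 - x) ^ n =
      ∑ k ∈ range (n + 1), (n.choose k : F) * (-1) ^ k *
        (if Fintype.card F - 1 ∣ n + k then -1 else 0) := by
  have : ∀ x : F, x ^ n * (1 - x) ^ n =
      ∑ k ∈ range (n + 1), (n.choose k : F) * (-1) ^ k * x ^ (n + k) := by
    intro x
    rw [sub_eq_neg_add, add_pow, mul_sum]
    refine sum_congr rfl fun k _ => ?_
    rw [neg_pow, one_pow, pow_add]; ring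
  simp_rw [this]
  rw [sum_comm]
  refine sum_congr rfl fun k _ => ?_
  rw [← mul_sum, sum_pow_F _ (by omega)]

lemma sum_beta_one (f : ℕ) (hf : 0 < f) (hq : Fintype.card F = 4 * f + 1) :
    ∑ x : F, x ^ f * (1 - x) ^ f = 0 := by
  rw [sum_beta f hf]
  refine sum_eq_zero fun k hk => ?_
  rw [mem_range] at hk
  rw [if_neg, mul_zero]
  intro h
  have := Nat.le_of_dvd (by omega) h
  omega

lemma sum_beta_three (f : ℕ) (hf : 0 < f) (hq : Fintype.card F = 4 * f + 1) :
    ∑ x : F, x ^ (3 * f) * (1 - x) ^ (3 * f) =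
      -((-1) ^ f * ((3 * f).choose f : F)) := by
  rw [sum_beta (3 * f) (by omega), sum_eq_single f]
  · rw [if_pos]
    · ring
    · rw [hq]; exact ⟨1, by omega⟩
  · intro k hk hkf
    rw [mem_range] at hk
    rw [if_neg, mul_zero]
    rintro ⟨c, hc⟩
    rw [hq, Nat.add_sub_cancel] at hc
    have h1 : c < 2 := by
      by_contra h
      have : 4 * f * 2 ≤ 4 * f * c := Nat.mul_le_mul_left _ (by omega)
      omega
    interval_cases c <;> omega
  · intro h
    exact absurd (mem_range.2 (by omega)) h


abbrev gI : GaussianInt := ⟨0, 1⟩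

lemma gI_sq : gI * gI = -1 := by decide

lemma gI_pow_four : gI ^ 4 = 1 := by decide

lemma gI_pow_cases (n : ℕ) : (n % 4 = 0 ∧ gI ^ n = 1) ∨ (n % 4 = 1 ∧ gI ^ n = gI) ∨
    (n % 4 = 2 ∧ gI ^ n = -1) ∨ (n % 4 = 3 ∧ gI ^ n = -gI) := by
  have h : gI ^ n = gI ^ (n % 4) := by
    conv_lhs => rw [← Nat.div_add_mod n 4, pow_add, pow_mul, gI_pow_four, one_pow, one_mul]
  rw [h]
  have : n % 4 < 4 := Nat.mod_lt _ (by norm_num)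
  interval_cases n % 4 <;> decide

/-- The data of a quartic character adapted to a primitive element. -/
structure Adapted (α : F) (χ : MulChar F GaussianInt) : Prop where
  prim : IsPrimitiveElt α
  card8 : Fintype.card F % 8 = 5
  val : χ α = gI

lemma prim_ne_zero {α : F} (hα : IsPrimitiveElt α) (hc : 2 < Fintype.card F) : α ≠ 0 := by
  rintro rfl
  obtain ⟨x, hx⟩ : ∃ x : F, x ∉ ({0, 1} : Finset F) := by
    by_contra! h
    have : Fintype.card F ≤ ({0, 1} : Finset F).card := Finset.card_le_card (fun x _ => h x)
    have := this.trans Finset.card_le_two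
    omega
  simp only [mem_insert, mem_singleton, not_or] at hx
  obtain ⟨n, hn⟩ := hα x hx.1
  rcases n with _ | n
  · exact hx.2 (by simpa using hn.symm)
  · exact hx.1 (by simpa using hn.symm)

lemma exists_adapted {α : F} (hα : IsPrimitiveElt α) (h8 : Fintype.card F % 8 = 5) :
    ∃ χ, Adapted α χ := by
  have h0 : α ≠ 0 := prim_ne_zero hα (by omega)
  let ζ : GaussianIntˣ := ⟨gI, -gI, by decide, by decide⟩
  have hζ : ζ ∈ rootsOfUnity (Fintype.card Fˣ) GaussianInt := by
    rw [mem_rootsOfUnity, Fintype.card_units]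
    ext1
    obtain ⟨k, hk⟩ : ∃ k, Fintype.card F - 1 = 4 * k := ⟨(Fintype.card F - 1) / 4, by omega⟩
    rw [hk, Units.val_pow_eq_pow_val, pow_mul]
    change (gI ^ 4) ^ k = 1
    rw [gI_pow_four, one_pow]
  have hg : ∀ x, x ∈ Subgroup.zpowers (Units.mk0 α h0) := by
    intro x
    obtain ⟨n, hn⟩ := hα x x.ne_zero
    exact ⟨n, by ext; simpa using hn⟩
  exact ⟨MulChar.ofRootOfUnity hζ hg, hα, h8, MulChar.ofRootOfUnity_spec hζ hg⟩

namespace Adapted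
variable {α : F} {χ : MulChar F GaussianInt} (H : Adapted α χ)
include H

lemma ne_zero : α ≠ 0 := prim_ne_zero H.prim (by have := H.card8; omega)

lemma two_ne : (2 : F) ≠ 0 := by
  intro h
  have h2 : ringChar F = 2 := CharP.ringChar_of_prime_eq_zero Nat.prime_two (by exact_mod_cast h)
  have := FiniteField.even_card_of_char_two h2
  have := H.card8
  omega

lemma val_pow (n : ℕ) : χ (α ^ n) = gI ^ n := by rw [map_pow, H.val]

lemma cases {x : F} (hx : x ≠ 0) : χ x = 1 ∨ χ x = gI ∨ χ x = -1 ∨ χ x = -gI := by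
  obtain ⟨n, rfl⟩ := H.prim x hx
  rw [H.val_pow]
  rcases gI_pow_cases n with h | h | h | h <;> simp [h.2]

lemma pow_mod (n : ℕ) : α ^ n = α ^ (n % (Fintype.card F - 1)) := by
  conv_lhs => rw [← Nat.div_add_mod n (Fintype.card F - 1), pow_add, pow_mul,
    FiniteField.pow_card_sub_one_eq_one α H.ne_zero, one_pow, one_mul]

lemma mem4 {i : ℕ} (hi : i < 4) {x : F} : x ∈ cycClass α 4 i ↔ χ x = gI ^ i := by
  have h8 := H.card8
  simp only [cycClass, mem_image, mem_range]
  constructor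
  · rintro ⟨j, _, rfl⟩
    rw [H.val_pow, pow_add, pow_mul, gI_pow_four, one_pow, one_mul]
  · intro h
    have hx : x ≠ 0 := by
      rintro rfl
      rw [MulChar.map_zero] at h
      rcases gI_pow_cases i with h' | h' | h' | h' <;> rw [h'.2] at h <;> revert h <;> decide
    obtain ⟨n, rfl⟩ := H.prim x hx
    rw [H.val_pow] at h
    have hn : n % 4 = i := by
      rcases gI_pow_cases i with h' | h' | h' | h' <;> rw [h'.2] at h <;>
      rcases gI_pow_cases n with h2 | h2 | h2 | h2 <;> rw [h2.2] at h <;>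
      first | omega | (exfalso; revert h; decide)
    set N := Fintype.card F - 1 with hN
    have h4 : (n % N) % 4 = n % 4 := Nat.mod_mod_of_dvd n (by omega)
    have hlt : n % N < N := Nat.mod_lt _ (by omega)
    refine ⟨(n % N) / 4, by omega, ?_⟩
    rw [H.pow_mod n, ← hN]
    congr 1
    omega

lemma mem2 {x : F} : x ∈ cycClass α 2 0 ↔ χ x = 1 ∨ χ x = -1 := by
  have h8 := H.card8
  simp only [cycClass, mem_image, mem_range]
  constructor
  · rintro ⟨j, _, rfl⟩
    rw [H.val_pow, add_zero]
    rcases gI_pow_cases (2 * j) with h | h | h | h <;> first | omega | simp [h.2]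
  · intro h
    have hx : x ≠ 0 := by
      rintro rfl
      rw [MulChar.map_zero] at h
      revert h; decide
    obtain ⟨n, rfl⟩ := H.prim x hx
    rw [H.val_pow] at h
    have hn : n % 2 = 0 := by
      rcases gI_pow_cases n with h2 | h2 | h2 | h2 <;> rw [h2.2] at h <;>
      first | omega | (exfalso; revert h; decide)
    set N := Fintype.card F - 1 with hN
    have h4 : (n % N) % 2 = n % 2 := Nat.mod_mod_of_dvd n (by omega)
    have hlt : n % N < N := Nat.mod_lt _ (by omega)
    refine ⟨(n % N) / 2, by omega, ?_⟩
    rw [H.pow_mod n, ← hN]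
    congr 1
    omega

lemma two_nonsquare : ¬ IsSquare (2 : F) := by
  rw [FiniteField.isSquare_two_iff]
  have := H.card8
  omega

lemma val_two : χ 2 = gI ∨ χ 2 = -gI := by
  rcases H.cases H.two_ne with h | h | h | h
  · exfalso
    have := H.mem2.2 (Or.inl h)
    simp only [cycClass, mem_image, mem_range] at this
    obtain ⟨j, _, hj⟩ := this
    exact H.two_nonsquare ⟨α ^ j, by rw [← hj]; ring⟩
  · exact Or.inl h
  · exfalso
    have := H.mem2.2 (Or.inr h)
    simp only [cycClass, mem_image, mem_range] at this
    obtain ⟨j, _, hj⟩ := this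
    exact H.two_nonsquare ⟨α ^ j, by rw [← hj]; ring⟩
  · exact Or.inr h

lemma iota_sq : α ^ ((Fintype.card F - 1) / 4) * α ^ ((Fintype.card F - 1) / 4) = -1 := by
  have h8 := H.card8
  set f := (Fintype.card F - 1) / 4 with hf
  have h1 : (α ^ f * α ^ f) * (α ^ f * α ^ f) = 1 := by
    have := FiniteField.pow_card_sub_one_eq_one α H.ne_zero
    rw [← this]
    simp only [← pow_add]
    congr 1; omega
  rcases mul_self_eq_one_iff.1 h1 with h | h
  · exfalso
    have h2 : ringChar F ≠ 2 := by
      intro h2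
      have := FiniteField.even_card_of_char_two h2
      omega
    have := H.two_nonsquare
    rw [FiniteField.isSquare_iff h2 H.two_ne] at this
    apply this
    obtain ⟨n, hn⟩ := H.prim 2 H.two_ne
    rw [← hn, ← pow_mul, mul_comm, pow_mul, show Fintype.card F / 2 = f + f by omega, pow_add, h,
      one_pow]
  · exact h

/-- reduction -/
noncomputable def red : GaussianInt →+* F :=
  Zsqrtd.lift ⟨α ^ ((Fintype.card F - 1) / 4), by rw [H.iota_sq]; simp⟩

noncomputable def red' : GaussianInt →+* F :=
  Zsqrtd.lift ⟨-α ^ ((Fintype.card F - 1) / 4), by rw [neg_mul_neg, H.iota_sq]; simp⟩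

lemma red_apply (z : GaussianInt) :
    H.red z = z.re + z.im * α ^ ((Fintype.card F - 1) / 4) := rfl

lemma red'_apply (z : GaussianInt) :
    H.red' z = z.re + z.im * (-α ^ ((Fintype.card F - 1) / 4)) := rfl

lemma red_chi (x : F) : H.red (χ x) = x ^ ((Fintype.card F - 1) / 4) := by
  have h8 := H.card8
  by_cases hx : x = 0
  · subst hx; rw [MulChar.map_zero, map_zero, zero_pow (by omega)]
  obtain ⟨n, rfl⟩ := H.prim x hx
  rw [H.val_pow, map_pow, H.red_apply, ← pow_mul, mul_comm n, pow_mul]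
  simp

lemma red'_chi (x : F) : H.red' (χ x) = x ^ (3 * ((Fintype.card F - 1) / 4)) := by
  have h8 := H.card8
  by_cases hx : x = 0
  · subst hx; rw [MulChar.map_zero, map_zero, zero_pow (by omega)]
  obtain ⟨n, rfl⟩ := H.prim x hx
  rw [H.val_pow, map_pow, H.red'_apply, ← pow_mul, mul_comm n, pow_mul]
  congr 1
  have := H.iota_sq
  rw [mul_comm 3, pow_mul, pow_succ, pow_two, this]
  simp

lemma neg_one_ne : (1 : F) ≠ -1 := by
  intro h
  apply H.two_ne
  linear_combination h

lemma val_neg_one : χ (-1) = -1 := by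
  have h8 := H.card8
  have h1 : H.red (χ (-1)) = -1 := by
    rw [H.red_chi, Odd.neg_one_pow]
    rw [Nat.odd_iff]; omega
  have h2 : χ (-1) * χ (-1) = 1 := by rw [← map_mul]; simp
  rcases mul_self_eq_one_iff.1 h2 with h | h
  · rw [h, map_one] at h1
    exact absurd h1 H.neg_one_ne
  · exact h

lemma chi_sq_ne : χ * χ ≠ 1 := by
  intro h
  have := congrArg (fun ψ : MulChar F GaussianInt => ψ α) h
  simp only [MulChar.mul_apply, H.val] at this
  rw [MulChar.one_apply (isUnit_iff_ne_zero.2 H.ne_zero)] at this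
  revert this; decide

lemma chi_ne : χ ≠ 1 := by
  intro h
  apply H.chi_sq_ne
  rw [h, one_mul]

lemma inv_apply_star (x : F) : χ⁻¹ x = star (χ x) := by
  by_cases hx : x = 0
  · subst hx; simp [MulChar.map_zero]
  have h1 : χ⁻¹ x * χ x = 1 := by
    rw [← MulChar.mul_apply, inv_mul_cancel, MulChar.one_apply (isUnit_iff_ne_zero.2 hx)]
  have h2 : χ x * star (χ x) = 1 := by
    rcases H.cases hx with h | h | h | h <;> rw [h] <;> decide
  calc χ⁻¹ x = χ⁻¹ x * (χ x * star (χ x)) := by rw [h2, mul_one]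
    _ = star (χ x) := by rw [← mul_assoc, h1, one_mul]

lemma jac_inv : jacobiSum χ⁻¹ χ⁻¹ = star (jacobiSum χ χ) := by
  simp only [jacobiSum, H.inv_apply_star, star_sum, star_mul']

lemma norm_jac : (jacobiSum χ χ).re ^ 2 + (jacobiSum χ χ).im ^ 2 = Fintype.card F := by
  have h8 := H.card8
  have hinj : Function.Injective GaussianInt.toComplex := by
    intro a b h; exact GaussianInt.toComplex_inj.1 h
  have hrc : ringChar ℂ ≠ ringChar F := by
    rw [ringChar.eq_zero]
    exact (CharP.ringChar_ne_zero_of_finite F).symm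
  have h1 : χ.ringHomComp GaussianInt.toComplex ≠ 1 :=
    (MulChar.ringHomComp_ne_one_iff hinj).2 H.chi_ne
  have h2 : χ.ringHomComp GaussianInt.toComplex * χ.ringHomComp GaussianInt.toComplex ≠ 1 := by
    rw [← MulChar.ringHomComp_mul]
    exact (MulChar.ringHomComp_ne_one_iff hinj).2 H.chi_sq_ne
  have h3 := jacobiSum_mul_jacobiSum_inv hrc h1 h1 h2
  rw [MulChar.ringHomComp_inv, jacobiSum_ringHomComp, jacobiSum_ringHomComp, H.jac_inv,
    ← map_mul, ← Zsqrtd.norm_eq_mul_conj] at h3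
  have h4 : (((jacobiSum χ χ).norm : ℤ) : ℂ) = ((Fintype.card F : ℤ) : ℂ) := by
    simpa using h3
  have h5 : (jacobiSum χ χ).norm = (Fintype.card F : ℤ) := by exact_mod_cast h4
  rw [← h5, Zsqrtd.norm_def]; ring

lemma red_jac : ((jacobiSum χ χ).re : F) +
    (jacobiSum χ χ).im * α ^ ((Fintype.card F - 1) / 4) = 0 := by
  have h8 := H.card8
  rw [← H.red_apply, jacobiSum, map_sum]
  simp only [map_mul, H.red_chi]
  exact sum_beta_one _ (by omega) (by omega)

lemma red'_jac {p m : ℕ} (hp : p.Prime) (hq : Fintype.card F = p ^ m) :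
    ((jacobiSum χ χ).re : F) ≠ 0 := by
  have h8 := H.card8
  have h4 := p_mod_four p m _ hq h8
  have hm : m ≠ 0 := by
    rintro rfl
    rw [pow_zero] at hq; omega
  have hchar : CharP F p := by
    have := Fact.mk hp
    refine (CharP.charP_iff_prime_eq_zero hp).2 ?_
    have : ((p ^ m : ℕ) : F) = 0 := by rw [← hq]; simp
    push_cast at this
    exact pow_eq_zero_iff hm |>.1 this
  have h1 : H.red' (jacobiSum χ χ) ≠ 0 := by
    rw [jacobiSum, map_sum]
    simp only [map_mul, H.red'_chi]
    rw [sum_beta_three _ (by omega) (by omega)]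
    rw [neg_ne_zero]
    apply mul_ne_zero
    · exact pow_ne_zero _ (by simp)
    · rw [Ne, CharP.cast_eq_zero_iff F p]
      exact choose_not_dvd p (p / 4) hp (by omega) m _ (by rw [← hq]; omega)
  rw [H.red'_apply] at h1
  have h2 := H.red_jac
  intro h
  apply h1
  rw [h] at h2 ⊢
  linear_combination -h2

end Adapted

lemma sum_invol (h2 : (2 : F) ≠ 0) (g : F → ℤ) (hg : ∀ x, g (1 - x) = g x) :
    (∑ x, g x - g 2⁻¹) % 2 = 0 := by
  have h1 : ∑ x ∈ univ.erase (2⁻¹ : F), ((g x : ℤ) : ZMod 2) = 0 := by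
    refine sum_involution (fun x _ => 1 - x) ?_ ?_ ?_ ?_
    · intro x _
      rw [hg]; exact CharTwo.add_self_eq_zero _
    · intro x hx _ h
      apply (mem_erase.1 hx).1
      refine eq_inv_of_mul_eq_one_left ?_
      linear_combination -h
    · intro x hx
      refine mem_erase.2 ⟨?_, mem_univ _⟩
      intro h
      apply (mem_erase.1 hx).1
      have : x = 1 - 2⁻¹ := by rw [← h]; ring
      rw [this]
      field_simp
      norm_num
    · intro x _; ring
  have h3 : ∑ x, g x = ∑ x ∈ univ.erase (2⁻¹ : F), g x + g 2⁻¹ :=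
    (sum_erase_add _ _ (mem_univ _)).symm
  rw [h3, add_sub_cancel_right]
  apply Int.emod_eq_zero_of_dvd
  rw [← Int.cast_sum] at h1
  exact_mod_cast (ZMod.intCast_zmod_eq_zero_iff_dvd _ 2).1 h1

lemma re_sum' (g : F → GaussianInt) : (∑ x, g x).re = ∑ x, (g x).re := by
  induction (univ : Finset F) using Finset.induction_on with
  | empty => rfl
  | insert a s ha ih => rw [sum_insert ha, sum_insert ha, Zsqrtd.re_add, ih]

lemma im_sum' (g : F → GaussianInt) : (∑ x, g x).im = ∑ x, (g x).im := by
  induction (univ : Finset F) using Finset.induction_on with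
  | empty => rfl
  | insert a s ha ih => rw [sum_insert ha, sum_insert ha, Zsqrtd.im_add, ih]

lemma sum_shift (ψ₁ ψ₂ : MulChar F GaussianInt) {z : F} (hz : z ≠ 0) :
    ∑ y, ψ₁ y * ψ₂ (y + z) = ψ₁ (-1) * (ψ₁ z * ψ₂ z) * jacobiSum ψ₁ ψ₂ := by
  rw [← Equiv.sum_comp (Equiv.mulLeft₀ (-z) (neg_ne_zero.2 hz)), jacobiSum, mul_sum]
  refine sum_congr rfl fun y _ => ?_
  have e1 : (Equiv.mulLeft₀ (-z) (neg_ne_zero.2 hz)) y = (-1) * z * y := by simp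
  have e2 : (-1) * z * y + z = z * (1 - y) := by ring
  rw [e1, e2]
  simp only [map_mul]
  ring

namespace Adapted
variable {α : F} {χ : MulChar F GaussianInt} (H : Adapted α χ)
include H

lemma val_half : χ 2⁻¹ * χ (1 - 2⁻¹) = -1 := by
  have h2 := H.two_ne
  have e : (1 : F) - 2⁻¹ = 2⁻¹ := by field_simp; norm_num
  rw [e]
  have h1 : χ 2⁻¹ * χ 2 = 1 := by rw [← map_mul, inv_mul_cancel₀ h2, map_one]
  have h3 : χ 2 * χ 2 = -1 := by
    rcases H.val_two with h | h <;> rw [h] <;> decide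
  linear_combination (χ 2⁻¹ * χ 2⁻¹) * h3 - (χ 2⁻¹ * χ 2 + 1) * h1

lemma jac_im_even : (jacobiSum χ χ).im % 2 = 0 := by
  have := sum_invol H.two_ne (fun x => (χ x * χ (1 - x)).im)
    (fun x => by simp only [sub_sub_cancel, mul_comm])
  rw [H.val_half] at this
  rw [jacobiSum, im_sum']
  simpa using this

lemma jac_mod_four : ((jacobiSum χ χ).re + (jacobiSum χ χ).im) % 4 = 1 := by
  have h8 := H.card8
  let w : F → ℤ := fun x => (χ x * χ (1 - x)).re + (χ x * χ (1 - x)).im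
  let d : F → ℤ := fun x => if w x = -1 then 1 else 0
  have hw : (jacobiSum χ χ).re + (jacobiSum χ χ).im = ∑ x, w x := by
    rw [jacobiSum, re_sum', im_sum', ← sum_add_distrib]
  have hsym : ∀ x, w (1 - x) = w x := fun x => by
    simp only [w, sub_sub_cancel, mul_comm]
  have hd := sum_invol H.two_ne d (fun x => by simp only [d, hsym])
  have hhalf : d 2⁻¹ = 1 := by
    simp only [d, w, H.val_half]; decide
  rw [hhalf] at hd
  have hval : ∀ x, w x = (if x = 0 then -1 else 0) + (if x = 1 then -1 else 0) + 1 - 2 * d x := by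
    intro x
    by_cases h0 : x = 0
    · subst h0; simp [d, w, MulChar.map_zero]
    by_cases h1 : x = 1
    · subst h1; simp [d, w, MulChar.map_zero]
    have h1' : 1 - x ≠ 0 := sub_ne_zero.2 (Ne.symm h1)
    rw [if_neg h0, if_neg h1]
    simp only [d, w, ← map_mul]
    rcases H.cases (mul_ne_zero h0 h1') with h | h | h | h <;> rw [h] <;> decide
  have hsum : ∑ x, w x = -1 + -1 + (Fintype.card F : ℤ) - 2 * ∑ x, d x := by
    simp_rw [hval]
    rw [sum_sub_distrib, sum_add_distrib, sum_add_distrib, ← mul_sum]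
    simp
  rw [hw, hsum]
  omega

/-- The Jacobi sum has imaginary part `t`. -/
lemma jac_im {p m : ℕ} (hp : p.Prime) (hq : Fintype.card F = p ^ m) {s t : ℤ}
    (hst : (Fintype.card F : ℤ) = s ^ 2 + t ^ 2) (hps : ¬ (p : ℤ) ∣ s) (hs4 : s % 4 = 1)
    (ht4 : t % 4 = 2) (ht : (t : F) * α ^ ((Fintype.card F - 1) / 4) = s) :
    (jacobiSum χ χ).im = t := by
  have h8 := H.card8
  have h4 := p_mod_four p m _ hq h8
  have hm : m ≠ 0 := by
    rintro rfl
    rw [pow_zero] at hq; omega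
  have hchar : CharP F p := by
    refine (CharP.charP_iff_prime_eq_zero hp).2 ?_
    have : ((p ^ m : ℕ) : F) = 0 := by rw [← hq]; simp
    push_cast at this
    exact pow_eq_zero_iff hm |>.1 this
  refine nt_final p m hp (by omega) (Fintype.card F) (by rw [hq]; push_cast; rfl) _ _ s t
    H.norm_jac.symm hst ?_ ?_ ?_ H.jac_im_even H.jac_mod_four hs4 ht4
  · rw [← CharP.intCast_eq_zero_iff F p]
    push_cast
    have := H.red_jac
    linear_combination (t : F) * this - ((jacobiSum χ χ).im : F) * ht
  · rw [← CharP.intCast_eq_zero_iff F p]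
    exact H.red'_jac hp hq
  · rw [← CharP.intCast_eq_zero_iff F p] at hps ⊢
    intro h
    rw [h, zero_mul] at ht
    exact hps ht.symm

lemma ind_formula (x : F) : 4 * (if χ x = 1 ∨ χ x = gI then (1 : GaussianInt) else 0) =
    2 * (1 : MulChar F GaussianInt) x + (1 - gI) * χ x + (1 + gI) * χ⁻¹ x := by
  rw [H.inv_apply_star]
  by_cases hx : x = 0
  · subst hx
    simp only [MulChar.map_zero]
    decide
  · rw [MulChar.one_apply (isUnit_iff_ne_zero.2 hx)]
    rcases H.cases hx with h | h | h | h <;> rw [h] <;> decide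

lemma count_formula (U : Finset F) (hU : ∀ x, x ∈ U ↔ (χ x = 1 ∨ χ x = gI)) {z : F} (hz : z ≠ 0) :
    16 * (∑ y, (if y ∈ U then (1 : GaussianInt) else 0) * (if y + z ∈ U then 1 else 0)) =
      4 * ((Fintype.card F : GaussianInt) - 3 - (χ z * χ z) * (jacobiSum χ χ).im) := by
  have e : ∀ y : F, 16 * ((if y ∈ U then (1 : GaussianInt) else 0) * (if y + z ∈ U then 1 else 0)) =
      4 * ((1 : MulChar F GaussianInt) y * (1 : MulChar F GaussianInt) (y + z)) +
      2 * (1 - gI) * ((1 : MulChar F GaussianInt) y * χ (y + z)) +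
      2 * (1 + gI) * ((1 : MulChar F GaussianInt) y * χ⁻¹ (y + z)) +
      2 * (1 - gI) * (χ y * (1 : MulChar F GaussianInt) (y + z)) +
      (1 - gI) * (1 - gI) * (χ y * χ (y + z)) +
      (1 - gI) * (1 + gI) * (χ y * χ⁻¹ (y + z)) +
      2 * (1 + gI) * (χ⁻¹ y * (1 : MulChar F GaussianInt) (y + z)) +
      (1 - gI) * (1 + gI) * (χ⁻¹ y * χ (y + z)) +
      (1 + gI) * (1 + gI) * (χ⁻¹ y * χ⁻¹ (y + z)) := by
    intro y
    simp only [hU]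
    have h1 := H.ind_formula y
    have h2 := H.ind_formula (y + z)
    generalize (if χ y = 1 ∨ χ y = gI then (1 : GaussianInt) else 0) = A at *
    generalize (if χ (y + z) = 1 ∨ χ (y + z) = gI then (1 : GaussianInt) else 0) = B at *
    rw [show 16 * (A * B) = (4 * A) * (4 * B) by ring, h1, h2]
    ring
  have hne : χ⁻¹ ≠ 1 := by rw [Ne, inv_eq_one]; exact H.chi_ne
  rw [mul_sum]
  simp_rw [e]
  simp only [sum_add_distrib, ← mul_sum, sum_shift _ _ hz]
  rw [jacobiSum_one_one, jacobiSum_one_nontrivial H.chi_ne, jacobiSum_one_nontrivial hne,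
    jacobiSum_comm χ 1, jacobiSum_comm χ⁻¹ 1, jacobiSum_one_nontrivial H.chi_ne,
    jacobiSum_one_nontrivial hne, jacobiSum_comm χ⁻¹ χ, jacobiSum_nontrivial_inv H.chi_ne,
    H.jac_inv]
  simp only [H.inv_apply_star, H.val_neg_one,
    MulChar.one_apply (isUnit_iff_ne_zero.2 hz),
    MulChar.one_apply (isUnit_iff_ne_zero.2 (neg_ne_zero.2 (one_ne_zero (α := F))))]
  have hJ : ∀ J : GaussianInt, (J.im : GaussianInt) * (2 * gI) = J - star J := by
    intro J; ext <;> simp; ring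
  have hI := gI_sq
  have hstar : star (-1 : GaussianInt) = -1 := by decide
  rw [hstar]
  have h1 : χ z * star (χ z) = 1 := by
    rcases H.cases hz with h | h | h | h <;> rw [h] <;> decide
  have h2 : star (χ z) * star (χ z) = χ z * χ z := by
    rcases H.cases hz with h | h | h | h <;> rw [h] <;> decide
  rw [mul_comm (star (χ z)) (χ z), h1, h2]
  have hJ := hJ (jacobiSum χ χ)
  generalize star (jacobiSum χ χ) = J' at *
  generalize ((jacobiSum χ χ).im : GaussianInt) = b at *
  generalize jacobiSum χ χ = J at *
  generalize star (χ z) = v at *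
  generalize χ z = u at *
  have hg : gI * gI = -1 := hI
  generalize gI = I at *
  linear_combination (-2 * I * u * u) * hJ + (4 * b * u * u + 2 - u * u * J - u * u * J') * hg

lemma count_int (U : Finset F) (hU : ∀ x, x ∈ U ↔ (χ x = 1 ∨ χ x = gI)) {z : F} (hz : z ≠ 0) :
    4 * ((Multiset.count z (extDiff U U) : ℕ) : ℤ) =
      Fintype.card F - 3 - (if χ z = 1 ∨ χ z = -1 then 1 else -1) * (jacobiSum χ χ).im := by
  have h1 := H.count_formula U hU hz
  have h2 : (∑ y, (if y ∈ U then (1 : GaussianInt) else 0) * (if y + z ∈ U then 1 else 0)) =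
      ((Multiset.count z (extDiff U U) : ℕ) : GaussianInt) := by
    have : Multiset.count z (extDiff U U) = (univ.filter (fun y => y ∈ U ∧ y + z ∈ U)).card := by
      rw [extDiff, Multiset.count_map]
      change ((U ×ˢ U).filter (fun p => z = p.1 - p.2)).card = _
      refine card_bij' (fun p _ => p.2) (fun y _ => (y + z, y)) ?_ ?_ ?_ ?_
      · rintro ⟨x, y⟩ h
        simp only [mem_filter, mem_product] at h
        obtain ⟨⟨hx, hy⟩, rfl⟩ := h
        simp [hx, hy]
      · intro y h
        simp only [mem_filter, mem_univ, true_and] at h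
        simp [h.1, h.2]
      · rintro ⟨x, y⟩ h
        simp only [mem_filter, mem_product] at h
        obtain ⟨_, rfl⟩ := h
        simp
      · intro y _; rfl
    rw [this, card_filter, Nat.cast_sum]
    refine sum_congr rfl fun y _ => ?_
    by_cases ha : y ∈ U <;> by_cases hb : y + z ∈ U <;> simp [ha, hb]
  have h3 : χ z * χ z = (((if χ z = 1 ∨ χ z = -1 then 1 else -1) : ℤ) : GaussianInt) := by
    rcases H.cases hz with h | h | h | h <;> rw [h] <;> decide
  rw [h2, h3] at h1
  have h4 : (4 : GaussianInt) ≠ 0 := by decide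
  have h5 : ((4 * ((Multiset.count z (extDiff U U) : ℕ) : ℤ) : ℤ) : GaussianInt) =
      ((Fintype.card F - 3 - (if χ z = 1 ∨ χ z = -1 then 1 else -1) * (jacobiSum χ χ).im : ℤ) :
        GaussianInt) := by
    apply mul_left_cancel₀ h4
    push_cast at h1 ⊢
    rw [← h1]; ring
  exact_mod_cast h5

lemma card_C (C : Finset F) (hC : ∀ x, x ∈ C ↔ χ x = 1) :
    C.card = (Fintype.card F - 1) / 4 := by
  have e : ∀ x : F, 4 * (if x ∈ C then (1 : GaussianInt) else 0) =
      (1 : MulChar F GaussianInt) x + χ x + (χ * χ) x + χ⁻¹ x := by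
    intro x
    simp only [hC]
    rw [H.inv_apply_star, MulChar.mul_apply]
    by_cases hx : x = 0
    · subst hx
      simp only [MulChar.map_zero]
      decide
    · rw [MulChar.one_apply (isUnit_iff_ne_zero.2 hx)]
      rcases H.cases hx with h | h | h | h <;> rw [h] <;> decide
  have hne : χ⁻¹ ≠ 1 := by rw [Ne, inv_eq_one]; exact H.chi_ne
  have h1 : ∑ x : F, 4 * (if x ∈ C then (1 : GaussianInt) else 0) =
      ((Fintype.card F - 1 : ℕ) : GaussianInt) := by
    simp_rw [e]
    rw [sum_add_distrib, sum_add_distrib, sum_add_distrib, MulChar.sum_eq_zero_of_ne_one H.chi_ne,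
      MulChar.sum_eq_zero_of_ne_one H.chi_sq_ne, MulChar.sum_eq_zero_of_ne_one hne,
      MulChar.sum_one_eq_card_units, Fintype.card_units]
    simp
  rw [← mul_sum] at h1
  have h2 : ∑ x : F, (if x ∈ C then (1 : GaussianInt) else 0) = (C.card : GaussianInt) := by
    simp
  rw [h2] at h1
  have h3 : 4 * C.card = Fintype.card F - 1 := by exact_mod_cast h1
  omega

lemma inv : Adapted α⁻¹ χ⁻¹ where
  prim := by
    intro x hx
    obtain ⟨n, hn⟩ := H.prim x⁻¹ (inv_ne_zero hx)
    exact ⟨n, by rw [inv_pow, hn, inv_inv]⟩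
  card8 := H.card8
  val := by rw [MulChar.inv_apply', inv_inv, H.val]

end Adapted

section Comb
variable {G : Type*} [AddCommGroup G] [Fintype G] [DecidableEq G]

lemma extDiff_eq_sum (D E : Finset G) :
    extDiff D E = ∑ x ∈ D, ∑ y ∈ E, ({x - y} : Multiset G) := by
  rw [← Finset.sum_product' D E (fun x y => ({x - y} : Multiset G)), extDiff,
    ← Multiset.sum_map_singleton (Multiset.map _ _), Multiset.map_map]
  rfl

lemma intDiff_add (D : Finset G) : intDiff D + D.card • ({0} : Multiset G) = extDiff D D := by
  have h1 : intDiff D = ∑ p ∈ (D ×ˢ D).filter (fun p => p.1 ≠ p.2), ({p.1 - p.2} : Multiset G) := by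
    rw [intDiff, ← Multiset.sum_map_singleton (Multiset.map _ _), Multiset.map_map]
    rfl
  have h2 : D.card • ({0} : Multiset G) =
      ∑ p ∈ (D ×ˢ D).filter (fun p => ¬ p.1 ≠ p.2), ({p.1 - p.2} : Multiset G) := by
    have : ∀ p ∈ (D ×ˢ D).filter (fun p => ¬ p.1 ≠ p.2), ({p.1 - p.2} : Multiset G) = {0} := by
      intro p hp
      rw [not_not.1 (mem_filter.1 hp).2, sub_self]
    rw [sum_congr rfl this, sum_const]
    congr 1
    refine card_bij' (fun x _ => (x, x)) (fun p _ => p.1) ?_ ?_ ?_ ?_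
    · intro x hx; simp [hx]
    · intro p hp; exact (mem_product.1 (mem_filter.1 hp).1).1
    · intro x _; rfl
    · rintro ⟨x, y⟩ hp
      have := not_not.1 (mem_filter.1 hp).2
      simp only at this
      rw [this]
  rw [h1, h2, sum_filter_add_sum_filter_not, sum_product, extDiff_eq_sum]

lemma ext_total {ι : Type*} [Fintype ι] [DecidableEq ι] (D : ι → Finset G)
    (hD : Pairwise (fun i j => Disjoint (D i) (D j))) :
    ∑ i, ∑ j ∈ univ.erase i, extDiff (D i) (D j) + ∑ i, intDiff (D i) +
      (∑ i, (D i).card) • ({0} : Multiset G) =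
    extDiff (univ.biUnion D) (univ.biUnion D) := by
  have hD' : Set.PairwiseDisjoint (↑(univ : Finset ι)) D := fun i _ j _ h => hD h
  rw [extDiff_eq_sum, sum_biUnion hD', sum_smul, add_assoc, ← sum_add_distrib,
    ← sum_add_distrib]
  refine sum_congr rfl fun i _ => ?_
  rw [intDiff_add, sum_erase_add _ _ (mem_univ i)]
  rw [sum_congr rfl (fun x _ => sum_biUnion hD'), sum_comm]
  exact sum_congr rfl fun j _ => extDiff_eq_sum _ _

end Comb

/-- The family `{i, 2i}` over a finset. -/
def famOf (C : Finset F) : {x : F // x ∈ C} → Finset F := fun i => {(i : F), 2 * (i : F)}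

namespace Adapted
variable {α : F} {χ : MulChar F GaussianInt} (H : Adapted α χ)
include H

lemma two_mul_ne {x : F} (hx : x ≠ 0) : x ≠ 2 * x := by
  intro h
  apply hx
  linear_combination -h

lemma ne_of_one {x : F} (h : χ x = 1) : x ≠ 0 := by
  rintro rfl
  rw [MulChar.map_zero] at h
  exact absurd h (by decide)

lemma fam_basic (C : Finset F) (hC : ∀ x, x ∈ C ↔ χ x = 1) :
    (∀ i, (0 : F) ∉ famOf C i) ∧ (∀ i, (famOf C i).card = 2) ∧
    Pairwise (fun i j => Disjoint (famOf C i) (famOf C j)) := by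
  have h2 := H.two_ne
  have hne : ∀ i : {x : F // x ∈ C}, (i : F) ≠ 0 := fun i => H.ne_of_one ((hC _).1 i.2)
  have h21 : χ 2 ≠ 1 := by
    rcases H.val_two with h | h <;> rw [h] <;> decide
  refine ⟨fun i => ?_, fun i => ?_, fun i j hij => ?_⟩
  · have := hne i
    simp only [famOf, mem_insert, mem_singleton, not_or]
    exact ⟨this.symm, (mul_ne_zero h2 this).symm⟩
  · exact card_pair (H.two_mul_ne (hne i))
  · have hij' : (i : F) ≠ j := fun h => hij (Subtype.ext h)
    have hi := (hC _).1 i.2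
    have hj := (hC _).1 j.2
    refine Finset.disjoint_left.2 ?_
    intro x hx hx'
    simp only [famOf, mem_insert, mem_singleton] at hx hx'
    rcases hx with rfl | rfl <;> rcases hx' with h | h
    · exact hij' h
    · rw [h, map_mul, hj, mul_one] at hi; exact h21 hi
    · rw [← h, map_mul, hi, mul_one] at hj; exact h21 hj
    · exact hij' (mul_left_cancel₀ h2 h)

lemma int_total (C T : Finset F) (hC : ∀ x, x ∈ C ↔ χ x = 1)
    (hT : ∀ x, x ∈ T ↔ (χ x = 1 ∨ χ x = -1)) :
    ∑ i, intDiff (famOf C i) = T.val := by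
  have h1 : ∀ i, intDiff (famOf C i) = {(i : F)} + {-(i : F)} := by
    intro i
    have hne : (i : F) ≠ 0 := H.ne_of_one ((hC _).1 i.2)
    have h2 := H.two_mul_ne hne
    have h3 := intDiff_add (famOf C i)
    rw [(H.fam_basic C hC).2.1 i, extDiff_eq_sum] at h3
    simp only [famOf] at h3 ⊢
    rw [sum_pair h2, sum_pair h2, sum_pair h2] at h3
    rw [sub_self, sub_self, show (i : F) - 2 * i = -i by ring, show 2 * (i : F) - i = i by ring,
      two_nsmul] at h3
    apply add_right_cancel (b := ({0} + {0} : Multiset F))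
    rw [h3]
    abel
  simp_rw [h1]
  rw [sum_add_distrib, sum_coe_sort C (fun x => ({x} : Multiset F)),
    sum_coe_sort C (fun x => ({-x} : Multiset F))]
  have h4 : ∑ x ∈ C, ({-x} : Multiset F) = ∑ x ∈ C.image (fun x => -x), {x} := by
    rw [sum_image]
    intro x _ y _ h
    exact neg_injective h
  rw [h4]
  have hneg : ∀ x : F, χ (-x) = - χ x := by
    intro x
    rw [show -x = (-1) * x by ring, map_mul, H.val_neg_one]; ring
  have hmem : ∀ x, x ∈ C.image (fun x => -x) ↔ χ x = -1 := by
    intro x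
    rw [mem_image]
    constructor
    · rintro ⟨y, hy, rfl⟩
      rw [hneg, (hC y).1 hy]
    · intro h
      exact ⟨-x, (hC _).2 (by rw [hneg, h, neg_neg]), neg_neg x⟩
  have hdisj : Disjoint C (C.image (fun x => -x)) := by
    rw [Finset.disjoint_left]
    intro x hx hx'
    rw [hC] at hx
    rw [hmem, hx] at hx'
    exact absurd hx' (by decide)
  rw [← sum_union hdisj, sum_multiset_singleton]
  congr 1
  ext x
  rw [mem_union, hC, hmem, hT]

lemma mem_biUnion_fam (C : Finset F) (hC : ∀ x, x ∈ C ↔ χ x = 1) (h2 : χ 2 = gI) (x : F) :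
    x ∈ univ.biUnion (famOf C) ↔ (χ x = 1 ∨ χ x = gI) := by
  simp only [mem_biUnion, mem_univ, true_and, famOf, mem_insert, mem_singleton]
  constructor
  · rintro ⟨i, rfl | rfl⟩
    · exact Or.inl ((hC _).1 i.2)
    · right; rw [map_mul, h2, (hC _).1 i.2, mul_one]
  · rintro (h | h)
    · exact ⟨⟨x, (hC x).2 h⟩, Or.inl rfl⟩
    · have h3 : 2 * (2⁻¹ * x) = x := by rw [← mul_assoc, mul_inv_cancel₀ H.two_ne, one_mul]
      refine ⟨⟨2⁻¹ * x, (hC _).2 ?_⟩, Or.inr h3.symm⟩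
      have h4 : gI * χ (2⁻¹ * x) = gI * 1 := by
        rw [← h2, ← map_mul, h3, h, h2, mul_one]
      exact mul_left_cancel₀ (by decide) h4

/-- Counting external differences. -/
lemma count_ext (C T : Finset F) (hC : ∀ x, x ∈ C ↔ χ x = 1)
    (hT : ∀ x, x ∈ T ↔ (χ x = 1 ∨ χ x = -1)) (h2 : χ 2 = gI) (z : F) :
    4 * ((Multiset.count z (∑ i, ∑ j ∈ univ.erase i, extDiff (famOf C i) (famOf C j)) : ℕ) : ℤ) =
      if z = 0 then 0 else if z ∈ T then (Fintype.card F : ℤ) - 7 - (jacobiSum χ χ).im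
        else (Fintype.card F : ℤ) - 3 + (jacobiSum χ χ).im := by
  have hb := H.fam_basic C hC
  have h1 := congrArg (Multiset.count z) (ext_total (famOf C) hb.2.2)
  rw [H.int_total C T hC hT, Multiset.count_add, Multiset.count_add, Multiset.count_nsmul,
    Multiset.count_singleton, Multiset.count_eq_of_nodup T.nodup] at h1
  by_cases hz : z = 0
  · rw [if_pos hz]
    have hcount : Multiset.count z (∑ i, ∑ j ∈ univ.erase i, extDiff (famOf C i) (famOf C j)) = 0 := by
      rw [Multiset.count_eq_zero]
      intro hmem
      rw [Multiset.mem_sum] at hmem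
      obtain ⟨i, _, hmem⟩ := hmem
      rw [Multiset.mem_sum] at hmem
      obtain ⟨j, hj, hmem⟩ := hmem
      rw [extDiff, Multiset.mem_map] at hmem
      obtain ⟨⟨x, y⟩, hp, hxy⟩ := hmem
      have hp' := mem_product.1 (Finset.mem_def.2 hp)
      rw [hz] at hxy
      have hxy' : x = y := sub_eq_zero.1 hxy
      simp only at hp'
      rw [hxy'] at hp'
      exact Finset.disjoint_left.1 (hb.2.2 (mem_erase.1 hj).1.symm) hp'.1 hp'.2
    rw [hcount]; rfl
  · have h3 := H.count_int _ (H.mem_biUnion_fam C hC h2) hz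
    rw [if_neg hz, mul_zero, add_zero] at h1
    rw [if_neg hz]
    rw [← h1] at h3
    simp only [← hT, Finset.mem_val] at h3
    by_cases hzT : z ∈ T
    · rw [if_pos hzT, if_pos hzT] at h3
      rw [if_pos hzT]
      push_cast at h3
      linarith
    · rw [if_neg hzT, if_neg hzT] at h3
      rw [if_neg hzT]
      push_cast at h3
      linarith

lemma zero_not_mem (T : Finset F) (hT : ∀ x, x ∈ T ↔ (χ x = 1 ∨ χ x = -1)) : (0 : F) ∉ T := by
  rw [hT, MulChar.map_zero]; decide

lemma edf (C T : Finset F) (hC : ∀ x, x ∈ C ↔ χ x = 1)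
    (hT : ∀ x, x ∈ T ↔ (χ x = 1 ∨ χ x = -1)) (h2 : χ 2 = gI) (hJ : (jacobiSum χ χ).im = -2) :
    IsEDF (famOf C) (Fintype.card F) ((Fintype.card F - 1) / 4) (fun _ => 2)
      ((Fintype.card F - 5) / 4) := by
  have h8 := H.card8
  have hb := H.fam_basic C hC
  refine ⟨rfl, by rw [Fintype.card_coe, H.card_C C hC], hb.1, hb.2.1, hb.2.2, ?_⟩
  ext z
  have h := H.count_ext C T hC hT h2 z
  rw [hJ] at h
  rw [Multiset.count_nsmul, Multiset.count_eq_of_nodup (Gstar F).nodup]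
  simp only [Finset.mem_val, Gstar, mem_erase, mem_univ, and_true]
  by_cases hz : z = 0
  · rw [if_pos hz] at h
    rw [if_neg (not_not.2 hz)]; omega
  · rw [if_neg hz] at h
    rw [if_pos hz]
    split_ifs at h <;> omega

lemma epdf (C T : Finset F) (hC : ∀ x, x ∈ C ↔ χ x = 1)
    (hT : ∀ x, x ∈ T ↔ (χ x = 1 ∨ χ x = -1)) (h2 : χ 2 = gI) (hJ : (jacobiSum χ χ).im = 2) :
    ∃ lam : ℕ, 4 * (lam : ℤ) = (Fintype.card F : ℤ) - 9 ∧
    IsEPDF (famOf C) (Fintype.card F) ((Fintype.card F - 1) / 4) (fun _ => 2) T lam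
      ((Fintype.card F - 1) / 4) := by
  have h8 := H.card8
  have hb := H.fam_basic C hC
  have h1T : (1 : F) ∈ T := (hT 1).2 (Or.inl (map_one χ))
  have hlam := H.count_ext C T hC hT h2 1
  rw [if_neg one_ne_zero, if_pos h1T, hJ] at hlam
  refine ⟨_, by rw [hlam]; ring, rfl, by rw [Fintype.card_coe, H.card_C C hC], hb.1, hb.2.1,
    hb.2.2, ?_⟩
  generalize Multiset.count 1 (∑ i, ∑ j ∈ univ.erase i, extDiff (famOf C i) (famOf C j)) = lam
    at hlam
  ext z
  have h := H.count_ext C T hC hT h2 z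
  rw [hJ] at h
  rw [Multiset.count_add, Multiset.count_nsmul, Multiset.count_nsmul,
    Multiset.count_eq_of_nodup (Gstar F \ T).nodup, Multiset.count_eq_of_nodup T.nodup]
  simp only [Finset.mem_val, Gstar, mem_sdiff, mem_erase, mem_univ, and_true]
  by_cases hz : z = 0
  · rw [if_pos hz] at h
    have hzT : z ∉ T := by rw [hz]; exact H.zero_not_mem T hT
    rw [if_neg hzT, if_neg (fun h => h.1 hz)]; omega
  · rw [if_neg hz] at h
    by_cases hzT : z ∈ T
    · rw [if_pos hzT] at h
      rw [if_pos hzT, if_neg (fun h => h.2 hzT)]; omega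
    · rw [if_neg hzT] at h
      rw [if_neg hzT, if_pos ⟨hz, hzT⟩]; omega

lemma dpdf (C T : Finset F) (hC : ∀ x, x ∈ C ↔ χ x = 1)
    (hT : ∀ x, x ∈ T ↔ (χ x = 1 ∨ χ x = -1)) :
    IsDPDF (famOf C) (Fintype.card F) ((Fintype.card F - 1) / 4) (fun _ => 2) T 1 0 := by
  have hb := H.fam_basic C hC
  refine ⟨rfl, by rw [Fintype.card_coe, H.card_C C hC], hb.1, hb.2.1, hb.2.2, ?_⟩
  rw [H.int_total C T hC hT, one_nsmul, zero_nsmul, add_zero]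

end Adapted

end Main

/-- For a prime power `q = p^m ≡ 5 (mod 8)` with Katre–Rajwade normalized
representation `q = s² + t²`, the family `D = {{i, 2i} : i ∈ C_0^4}` is:
(i) if `2 ∈ C_1^4`: a `(q,(q-1)/4,2,(q-5)/4)`-EDF when `t = -2`, and a
`(q,(q-1)/4,2;(q-9)/4,(q-1)/4)`-EPDF relative to `C_0^2` when `t = 2`;
(ii) if `2 ∈ C_3^4`: a `(q,(q-1)/4,2,(q-5)/4)`-EDF when `t = 2`, and a
`(q,(q-1)/4,2;(q-9)/4,(q-1)/4)`-EPDF relative to `C_0^2` when `t = -2`.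
In all cases `D` is a `(q,(q-1)/4,2;1,0)`-DPDF relative to `C_0^2`. -/
theorem stmt_12 {F : Type*} [Field F] [Fintype F] [DecidableEq F]
    (q p m : ℕ) (hp : p.Prime) (hq : Fintype.card F = q) (hqpm : q = p ^ m)
    (hq8 : q % 8 = 5)
    (α : F) (hα : IsPrimitiveElt α)
    (s t : ℤ) (hst : (q : ℤ) = s ^ 2 + t ^ 2)
    (hps : ¬((p : ℤ) ∣ s)) (hs4 : s % 4 = 1)
    (ht : (t : F) * α ^ ((q - 1) / 4) = (s : F)) :
    ((2 : F) ∈ cycClass α 4 1 →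
      (t = -2 → IsEDF (pairFam α) q ((q - 1) / 4) (fun _ => 2) ((q - 5) / 4)) ∧
      (t = 2 → ∃ lam : ℕ, 4 * (lam : ℤ) = (q : ℤ) - 9 ∧
        IsEPDF (pairFam α) q ((q - 1) / 4) (fun _ => 2) (cycClass α 2 0)
          lam ((q - 1) / 4))) ∧
    ((2 : F) ∈ cycClass α 4 3 →
      (t = 2 → IsEDF (pairFam α) q ((q - 1) / 4) (fun _ => 2) ((q - 5) / 4)) ∧
      (t = -2 → ∃ lam : ℕ, 4 * (lam : ℤ) = (q : ℤ) - 9 ∧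
        IsEPDF (pairFam α) q ((q - 1) / 4) (fun _ => 2) (cycClass α 2 0)
          lam ((q - 1) / 4))) ∧
    IsDPDF (pairFam α) q ((q - 1) / 4) (fun _ => 2) (cycClass α 2 0) 1 0 := by
  subst hq
  obtain ⟨χ, H⟩ := exists_adapted hα hq8
  have hC : ∀ x, x ∈ cycClass α 4 0 ↔ χ x = 1 := fun x => by
    rw [H.mem4 (by norm_num), pow_zero]
  have hT : ∀ x, x ∈ cycClass α 2 0 ↔ (χ x = 1 ∨ χ x = -1) := fun x => H.mem2
  have hstar1 : ∀ x : F, χ⁻¹ x = 1 ↔ χ x = 1 := fun x => by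
    rw [H.inv_apply_star]
    exact star_eq_iff_star_eq.trans (by rw [star_one]; exact eq_comm)
  have hstar2 : ∀ x : F, χ⁻¹ x = -1 ↔ χ x = -1 := fun x => by
    rw [H.inv_apply_star]
    exact star_eq_iff_star_eq.trans (by rw [star_neg, star_one]; exact eq_comm)
  have hC' : ∀ x, x ∈ cycClass α 4 0 ↔ χ⁻¹ x = 1 := fun x => by rw [hC, hstar1]
  have hT' : ∀ x, x ∈ cycClass α 2 0 ↔ (χ⁻¹ x = 1 ∨ χ⁻¹ x = -1) := fun x => by
    rw [hT, hstar1, hstar2]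
  have hJ : t % 4 = 2 → (jacobiSum χ χ).im = t := fun ht4 =>
    H.jac_im hp hqpm hst hps hs4 ht4 ht
  have hJ' : t % 4 = 2 → (jacobiSum χ⁻¹ χ⁻¹).im = -t := fun ht4 => by
    rw [H.jac_inv, Zsqrtd.im_star, hJ ht4]
  refine ⟨fun h2 => ?_, fun h2 => ?_, H.dpdf _ _ hC hT⟩
  · have h2' : χ 2 = gI := by rw [(H.mem4 (by norm_num)).1 h2, pow_one]
    refine ⟨fun h => ?_, fun h => ?_⟩
    · exact H.edf _ _ hC hT h2' (by rw [hJ (by omega), h])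
    · exact H.epdf _ _ hC hT h2' (by rw [hJ (by omega), h])
  · have h2' : χ⁻¹ 2 = gI := by
      rw [H.inv_apply_star, (H.mem4 (by norm_num)).1 h2]; decide
    refine ⟨fun h => ?_, fun h => ?_⟩
    · exact H.inv.edf _ _ hC' hT' h2' (by rw [hJ' (by omega), h])
    · exact H.inv.epdf _ _ hC' hT' h2' (by rw [hJ' (by omega), h]; rfl)
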